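/- Let α ∈ (0,π), γ ∈ (0,π/2], B = (sin γ·cos(α/2), sin γ·sin(α/2), cos γ) = (b₁,b₂,b₃). Let Hp^low := {(x₁,x₂) ∈ ℝ² : x₂ > −x₁·tan(α/2)}. Then for every τ ∈ ℝ, the infimum, over all smooth compactly supported u : ℝ² → ℂ with ∫_{Hp^low}|u|² > 0, of (∫_{Hp^low} |(−i∂₁ + x₂b₃)u|² + |∂₂u|² + (x₁b₂ − x₂b₁ − τ)²|u|² dx)/(∫_{Hp^low}|u|² dx) equals σ(arcsin(sin α·sin γ)); in particular this infimum does not depend on τ. -/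

import Mathlib

open Real MeasureTheory Set Filter

noncomputable section

namespace MagWedge

/-- The infinite sector `S_α := {(x₁,x₂) : |x₂| ≤ x₁·tan(α/2)}`. -/
def sector (α : ℝ) : Set (ℝ × ℝ) :=
  {x | |x.2| ≤ x.1 * Real.tan (α / 2)}

/-- The infinite wedge `W_α := S_α × ℝ` (coordinates `(x₁, x₂, x₃)`). -/
def wedge (α : ℝ) : Set (ℝ × ℝ × ℝ) :=
  {x | |x.2.1| ≤ x.1 * Real.tan (α / 2)}

/-- The upper half-plane `Hp^up := {x₂ < x₁·tan(α/2)}`. -/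
def hpUp (α : ℝ) : Set (ℝ × ℝ) :=
  {x | x.2 < x.1 * Real.tan (α / 2)}

/-- The lower half-plane `Hp^low := {x₂ > −x₁·tan(α/2)}`. -/
def hpLow (α : ℝ) : Set (ℝ × ℝ) :=
  {x | -(x.1 * Real.tan (α / 2)) < x.2}

/-- The magnetic/electric energy of `u` on a planar domain `Ω`, for magnetic field
`(b₁,b₂,b₃)` (gauge `A̲ = (−x₂ b₃, 0)`) and Fourier parameter `τ`. -/
def energy2D (Ω : Set (ℝ × ℝ)) (b1 b2 b3 τ : ℝ) (u : ℝ × ℝ → ℂ) : ℝ :=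
  ∫ x in Ω,
    ‖(-Complex.I) * fderiv ℝ u x (1, 0) + ((x.2 * b3 : ℝ) : ℂ) * u x‖ ^ 2
      + ‖fderiv ℝ u x (0, 1)‖ ^ 2
      + (x.1 * b2 - x.2 * b1 - τ) ^ 2 * ‖u x‖ ^ 2

/-- The squared `L²`-norm of `u` on a planar domain `Ω`. -/
def norm2D (Ω : Set (ℝ × ℝ)) (u : ℝ × ℝ → ℂ) : ℝ := ∫ x in Ω, ‖u x‖ ^ 2

/-- The bottom of the spectrum of the Neumann realization of
`(−i∇−A̲)² + (x₁b₂−x₂b₁−τ)²` on `Ω`, via the Rayleigh quotient. -/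
def specInf2D (Ω : Set (ℝ × ℝ)) (b1 b2 b3 τ : ℝ) : ℝ :=
  sInf { r : ℝ | ∃ u : ℝ × ℝ → ℂ, ContDiff ℝ (⊤ : ℕ∞) u ∧ HasCompactSupport u ∧
    0 < norm2D Ω u ∧ r = energy2D Ω b1 b2 b3 τ u / norm2D Ω u }

/-- The band function `s(B;α,τ)` on the sector `S_α`. -/
def bandFn (α b1 b2 b3 τ : ℝ) : ℝ := specInf2D (sector α) b1 b2 b3 τ

/-- `Σ(B;α,τ,R)` : the Rayleigh quotient infimum over functions supported outside the
(closed Euclidean) ball of radius `R` centered at the origin. -/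
def SigmaR (α b1 b2 b3 τ R : ℝ) : ℝ :=
  sInf { r : ℝ | ∃ u : ℝ × ℝ → ℂ, ContDiff ℝ (⊤ : ℕ∞) u ∧ HasCompactSupport u ∧
    (tsupport u ⊆ {x : ℝ × ℝ | R ^ 2 < x.1 ^ 2 + x.2 ^ 2}) ∧
    0 < norm2D (sector α) u ∧
    r = energy2D (sector α) b1 b2 b3 τ u / norm2D (sector α) u }

/-- The bottom of the essential spectrum via Persson's characterization:
`s_ess(B;α,τ) = sup_{R>0} Σ(B;α,τ,R)`. -/
def sEss (α b1 b2 b3 τ : ℝ) : ℝ :=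
  sSup { r : ℝ | ∃ R > (0 : ℝ), r = SigmaR α b1 b2 b3 τ R }

/-- The 3D magnetic energy on a domain `Ω ⊆ ℝ³` for the constant field `(b₁,b₂,b₃)`,
in the gauge `A = (−x₂b₃, 0, x₂b₁ − x₁b₂)`. -/
def energy3D (Ω : Set (ℝ × ℝ × ℝ)) (b1 b2 b3 : ℝ) (u : ℝ × ℝ × ℝ → ℂ) : ℝ :=
  ∫ x in Ω,
    ‖(-Complex.I) * fderiv ℝ u x (1, 0, 0) + ((x.2.1 * b3 : ℝ) : ℂ) * u x‖ ^ 2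
      + ‖fderiv ℝ u x (0, 1, 0)‖ ^ 2
      + ‖(-Complex.I) * fderiv ℝ u x (0, 0, 1) - ((x.2.1 * b1 : ℝ) : ℂ) * u x
          + ((x.1 * b2 : ℝ) : ℂ) * u x‖ ^ 2

/-- The squared `L²`-norm of `u` on a domain `Ω ⊆ ℝ³`. -/
def norm3D (Ω : Set (ℝ × ℝ × ℝ)) (u : ℝ × ℝ × ℝ → ℂ) : ℝ := ∫ x in Ω, ‖u x‖ ^ 2

/-- `λ(B;W_α)` : the bottom of the spectrum of the Neumann magnetic Laplacian on the
wedge `W_α` with constant magnetic field `B = (b₁,b₂,b₃)`. -/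
def lambdaWedge (α b1 b2 b3 : ℝ) : ℝ :=
  sInf { r : ℝ | ∃ u : ℝ × ℝ × ℝ → ℂ, ContDiff ℝ (⊤ : ℕ∞) u ∧ HasCompactSupport u ∧
    0 < norm3D (wedge α) u ∧ r = energy3D (wedge α) b1 b2 b3 u / norm3D (wedge α) u }

/-- The de Gennes function `μ₁(ξ)`: bottom of the spectrum of the Neumann realization of
`−d²/dt² + (t−ξ)²` on the half-line. -/
def deGennes (ξ : ℝ) : ℝ :=
  sInf { r : ℝ | ∃ u : ℝ → ℂ, ContDiff ℝ (⊤ : ℕ∞) u ∧ HasCompactSupport u ∧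
    (0 < ∫ t in Ioi (0 : ℝ), ‖u t‖ ^ 2) ∧
    r = (∫ t in Ioi (0 : ℝ), ‖deriv u t‖ ^ 2 + (t - ξ) ^ 2 * ‖u t‖ ^ 2) /
        (∫ t in Ioi (0 : ℝ), ‖u t‖ ^ 2) }

/-- `Θ₀ := inf_ξ μ₁(ξ)`. -/
def Theta0 : ℝ := ⨅ ξ : ℝ, deGennes ξ

/-- The half-space `{(s,t,z) : t > 0}` in ℝ³. -/
def halfSpace3 : Set (ℝ × ℝ × ℝ) := {x | 0 < x.2.1}

/-- `σ(θ)` : the bottom of the spectrum of the Neumann magnetic Laplacian on the half-space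
with a unit magnetic field making angle `θ` with the boundary. -/
def sigmaHS (θ : ℝ) : ℝ :=
  sInf { r : ℝ | ∃ u : ℝ × ℝ × ℝ → ℂ, ContDiff ℝ (⊤ : ℕ∞) u ∧ HasCompactSupport u ∧
    (0 < ∫ x in halfSpace3, ‖u x‖ ^ 2) ∧
    r = (∫ x in halfSpace3,
          ‖fderiv ℝ u x (1, 0, 0)‖ ^ 2 + ‖fderiv ℝ u x (0, 1, 0)‖ ^ 2
            + ‖(-Complex.I) * fderiv ℝ u x (0, 0, 1)
                - ((x.2.1 * Real.cos θ : ℝ) : ℂ) * u x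
                + ((x.1 * Real.sin θ : ℝ) : ℂ) * u x‖ ^ 2) /
        (∫ x in halfSpace3, ‖u x‖ ^ 2) }

/-- `μ(α)` : the bottom of the spectrum of the magnetic Neumann Laplacian on the sector
`S_α` with unit constant (scalar) magnetic field. -/
def muSector (α : ℝ) : ℝ :=
  sInf { r : ℝ | ∃ u : ℝ × ℝ → ℂ, ContDiff ℝ (⊤ : ℕ∞) u ∧ HasCompactSupport u ∧
    0 < norm2D (sector α) u ∧
    r = (∫ x in sector α,
          ‖(-Complex.I) * fderiv ℝ u x (1, 0) + (x.2 : ℂ) * u x‖ ^ 2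
            + ‖fderiv ℝ u x (0, 1)‖ ^ 2) / norm2D (sector α) u }

end MagWedge

/-!
Translating along the edge of the half-plane and compensating by a gauge phase shifts the linear
form `x₁b₂ − x₂b₁` by a constant, which is nonzero when `B` is not tangent to the boundary of
`Hp^low × ℝ`; hence the bottom of the spectrum does not depend on `τ`. On the other hand, the
infimum over `τ` of these bottoms is the bottom of the spectrum of the magnetic Laplacian on
`Hp^low × ℝ` with field `B`: cutoffs of `exp(iτx₃)u(x₁,x₂)` give one inequality, Plancherel's
theorem in the variable `x₃` the other one. Finally a rotation followed by a quadratic gauge phase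
turns that operator into the model defining `σ(θ)`, where `sin θ = sin α sin γ` is the normal
component of `B`.
-/

namespace MagWedge

open Complex (I)
open scoped NNReal ENNReal

/-! ### Test functions and Rayleigh quotients -/

section TestFunctions

variable {E F : Type*} [NormedAddCommGroup E] [NormedSpace ℝ E]
  [NormedAddCommGroup F] [NormedSpace ℝ F]

/-- Smooth compactly supported complex functions, the admissible functions in every Rayleigh
quotient below. -/
structure IsTestFun (u : E → ℂ) : Prop where
  contDiff : ContDiff ℝ (⊤ : ℕ∞) u
  hasCompactSupport : HasCompactSupport u

theorem isTestFun_iff {u : E → ℂ} :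
    IsTestFun u ↔ ContDiff ℝ (⊤ : ℕ∞) u ∧ HasCompactSupport u :=
  ⟨fun h => ⟨h.contDiff, h.hasCompactSupport⟩, fun h => ⟨h.1, h.2⟩⟩

theorem contDiff_ofReal {f : E → ℝ} (hf : ContDiff ℝ (⊤ : ℕ∞) f) :
    ContDiff ℝ (⊤ : ℕ∞) fun x => (f x : ℂ) :=
  Complex.ofRealCLM.contDiff.comp hf

theorem contDiff_cexp_ofReal_mul_I {φ : E → ℝ} (hφ : ContDiff ℝ (⊤ : ℕ∞) φ) :
    ContDiff ℝ (⊤ : ℕ∞) fun x => Complex.exp (φ x * I) :=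
  ((contDiff_ofReal hφ).mul contDiff_const).cexp

namespace IsTestFun

variable {u v : E → ℂ}

theorem continuous (hu : IsTestFun u) : Continuous u :=
  hu.contDiff.continuous

theorem differentiable (hu : IsTestFun u) : Differentiable ℝ u :=
  hu.contDiff.differentiable (by simp)

theorem add (hu : IsTestFun u) (hv : IsTestFun v) : IsTestFun fun x => u x + v x :=
  ⟨hu.contDiff.add hv.contDiff, hu.hasCompactSupport.add hv.hasCompactSupport⟩

theorem mul_left {f : E → ℂ} (hf : ContDiff ℝ (⊤ : ℕ∞) f) (hu : IsTestFun u) :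
    IsTestFun fun x => f x * u x :=
  ⟨hf.mul hu.contDiff, hu.hasCompactSupport.mul_left⟩

theorem fderiv_apply (hu : IsTestFun u) (h : E) : IsTestFun fun x => fderiv ℝ u x h :=
  ⟨(hu.contDiff.fderiv_right (by simp)).clm_apply contDiff_const,
    hu.hasCompactSupport.fderiv_apply ℝ h⟩

theorem comp_homeomorph (hu : IsTestFun u) (f : F ≃ₜ E) (hf : ContDiff ℝ (⊤ : ℕ∞) f) :
    IsTestFun fun x => u (f x) :=
  ⟨hu.contDiff.comp hf, hu.hasCompactSupport.comp_homeomorph f⟩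

variable [MeasurableSpace E] [BorelSpace E] (μ : Measure E) [IsFiniteMeasureOnCompacts μ]

theorem integrable_norm_sq (hu : IsTestFun u) : Integrable (fun x => ‖u x‖ ^ 2) μ :=
  have hsupp : HasCompactSupport fun x => ‖u x‖ ^ 2 :=
    hu.hasCompactSupport.comp_left (g := fun z => ‖z‖ ^ 2) (by simp)
  (hu.continuous.norm.pow 2).integrable_of_hasCompactSupport hsupp

theorem ofReal_integral_norm_sq (hu : IsTestFun u) :
    ENNReal.ofReal (∫ x, ‖u x‖ ^ 2 ∂μ) = ∫⁻ x, ‖u x‖ₑ ^ 2 ∂μ := by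
  rw [ofReal_integral_eq_lintegral_ofReal (hu.integrable_norm_sq μ)
    (Eventually.of_forall fun x => sq_nonneg _)]
  simp_rw [ENNReal.ofReal_pow (norm_nonneg _), ofReal_norm]

end IsTestFun

variable [MeasurableSpace E] [MeasurableSpace F]

theorem ofReal_integral_sum_norm_sq [BorelSpace E] (μ : Measure E) [IsFiniteMeasureOnCompacts μ]
    {ι : Type*} [Fintype ι] {g : ι → E → ℂ} (hg : ∀ i, IsTestFun (g i)) :
    ENNReal.ofReal (∫ x, ∑ i, ‖g i x‖ ^ 2 ∂μ) = ∑ i, ∫⁻ x, ‖g i x‖ₑ ^ 2 ∂μ := by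
  rw [integral_finsetSum _ fun i _ => (hg i).integrable_norm_sq μ,
    ENNReal.ofReal_sum_of_nonneg fun i _ => integral_nonneg fun x => sq_nonneg _]
  simp_rw [fun i => (hg i).ofReal_integral_norm_sq μ]

theorem exists_isTestFun_integral_norm_sq_pos [BorelSpace E] [FiniteDimensional ℝ E]
    {μ : Measure E} [IsFiniteMeasureOnCompacts μ] (hμ : μ ≠ 0) :
    ∃ u : E → ℂ, IsTestFun u ∧ 0 < ∫ x, ‖u x‖ ^ 2 ∂μ := by
  obtain ⟨x, hx⟩ := Measure.nonempty_support hμ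
  let f : ContDiffBump x := default
  have hf : IsTestFun fun y => (f y : ℂ) :=
    ⟨contDiff_ofReal f.contDiff,
      f.hasCompactSupport.comp_left (g := fun r : ℝ => (r : ℂ)) (by simp)⟩
  refine ⟨_, hf, (integral_pos_iff_support_of_nonneg (fun _ => sq_nonneg _)
    (hf.integrable_norm_sq μ)).2 ?_⟩
  have hsupp : Function.support (fun y => ‖(f y : ℂ)‖ ^ 2) = Metric.ball x f.rOut := by
    rw [← f.support_eq]
    ext y
    simp
  rw [hsupp]
  exact (Measure.mem_support_iff_forall x).1 hx _ (Metric.ball_mem_nhds x f.rOut_pos)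

/-- The bottom of the spectrum of the nonnegative quadratic form `Q` on `L²(μ)`, by the min-max
principle on test functions. For a domain `Ω`, taking `μ = volume.restrict Ω` imposes no condition
at `∂Ω`, which gives the Neumann realization. It is `0` by convention when `μ = 0`. -/
def rayleighInf (μ : Measure E) (Q : (E → ℂ) → ℝ) : ℝ :=
  sInf {r | ∃ u, IsTestFun u ∧ 0 < ∫ x, ‖u x‖ ^ 2 ∂μ ∧ r = Q u / ∫ x, ‖u x‖ ^ 2 ∂μ}

section Nonneg

variable {μ : Measure E} {Q : (E → ℂ) → ℝ} {u : E → ℂ} {l : ℝ}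

theorem rayleighInf_nonneg (hQ : 0 ≤ Q) : 0 ≤ rayleighInf μ Q :=
  Real.sInf_nonneg fun _ ⟨u, _, hpos, hr⟩ => hr ▸ div_nonneg (hQ u) hpos.le

theorem rayleighInf_mul_le (hQ : 0 ≤ Q) (hu : IsTestFun u) :
    rayleighInf μ Q * ∫ x, ‖u x‖ ^ 2 ∂μ ≤ Q u := by
  obtain hzero | hpos := (integral_nonneg fun x => sq_nonneg ‖u x‖ :
    0 ≤ ∫ x, ‖u x‖ ^ 2 ∂μ).eq_or_lt
  · simpa [← hzero] using hQ u
  · refine (le_div_iff₀ hpos).1 (csInf_le ⟨0, ?_⟩ ⟨u, hu, hpos, rfl⟩)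
    rintro _ ⟨v, -, hv, rfl⟩
    exact div_nonneg (hQ v) hv.le

theorem le_rayleighInf [BorelSpace E] [FiniteDimensional ℝ E] [IsFiniteMeasureOnCompacts μ]
    (hμ : μ ≠ 0) (h : ∀ u, IsTestFun u → l * ∫ x, ‖u x‖ ^ 2 ∂μ ≤ Q u) : l ≤ rayleighInf μ Q := by
  obtain ⟨u, hu, hpos⟩ := exists_isTestFun_integral_norm_sq_pos hμ
  refine le_csInf ⟨_, u, hu, hpos, rfl⟩ ?_
  rintro _ ⟨v, hv, hvpos, rfl⟩
  exact (le_div_iff₀ hvpos).2 (h v hv)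

end Nonneg

theorem rayleighInf_eq_of_gauge [BorelSpace E] [BorelSpace F] {μ : Measure E} {ν : Measure F}
    {Q : (E → ℂ) → ℝ} {Q' : (F → ℂ) → ℝ} (f : E ≃ₜ F) (hf : ContDiff ℝ (⊤ : ℕ∞) f)
    (hf' : ContDiff ℝ (⊤ : ℕ∞) f.symm) {k : ℝ≥0} (hk : k ≠ 0) (hμ : μ.map f = k • ν) {φ : E → ℝ}
    (hφ : ContDiff ℝ (⊤ : ℕ∞) φ)
    (hQ : ∀ u, IsTestFun u → Q (fun x => Complex.exp (φ x * I) * u (f x)) = k * Q' u) :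
    rayleighInf μ Q = rayleighInf ν Q' := by
  have hnorm (u : F → ℂ) :
      ∫ x, ‖Complex.exp (φ x * I) * u (f x)‖ ^ 2 ∂μ = k * ∫ y, ‖u y‖ ^ 2 ∂ν := by
    simp_rw [norm_mul, Complex.norm_exp_ofReal_mul_I, one_mul]
    rw [← f.measurableEmbedding.integral_map (fun y => ‖u y‖ ^ 2), hμ, integral_smul_nnreal_measure,
      NNReal.smul_def, smul_eq_mul]
  have hk0 : (0 : ℝ) < k := by positivity
  refine congrArg sInf (Set.ext fun r => ⟨?_, ?_⟩)
  · rintro ⟨u, hu, hpos, rfl⟩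
    let w : F → ℂ := fun y => Complex.exp ((-φ (f.symm y) : ℝ) * I) * u (f.symm y)
    have hw : IsTestFun w :=
      (hu.comp_homeomorph f.symm hf').mul_left (contDiff_cexp_ofReal_mul_I (hφ.comp hf').neg)
    have huw : u = fun x => Complex.exp (φ x * I) * w (f x) := by
      ext x
      simp [w, ← mul_assoc, ← Complex.exp_add]
    rw [huw, hnorm] at hpos ⊢
    exact ⟨w, hw, pos_of_mul_pos_right hpos hk0.le, by rw [hQ w hw, mul_div_mul_left _ _ hk0.ne']⟩
  · rintro ⟨w, hw, hpos, rfl⟩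
    refine ⟨_, (hw.comp_homeomorph f hf).mul_left (contDiff_cexp_ofReal_mul_I hφ), ?_, ?_⟩
    · rw [hnorm]
      exact mul_pos hk0 hpos
    · rw [hnorm, hQ w hw, mul_div_mul_left _ _ hk0.ne']

end TestFunctions

/-! ### Magnetic derivatives and gauge covariance -/

section Magnetic

variable {E F ι : Type*} [NormedAddCommGroup E] [NormedSpace ℝ E]
  [NormedAddCommGroup F] [NormedSpace ℝ F] [Fintype ι]

/-- The magnetic derivative `(−i∂ₕ + A(x)h) u(x)` of `u` in the direction `h`, for the magnetic
potential `-A` seen as a `1`-form. -/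
def magDeriv (A : E → E →L[ℝ] ℝ) (u : E → ℂ) (x h : E) : ℂ :=
  -I * fderiv ℝ u x h + (A x h : ℝ) * u x

/-- The magnetic Dirichlet energy `∫ |(−i∇ + A)u|² dμ`, where the gradient is taken in the frame
`e`. -/
def magEnergy [MeasurableSpace E] (μ : Measure E) (e : ι → E) (A : E → E →L[ℝ] ℝ) (u : E → ℂ) : ℝ :=
  ∫ x, ∑ i, ‖magDeriv A u x (e i)‖ ^ 2 ∂μ

theorem magEnergy_nonneg [MeasurableSpace E] (μ : Measure E) (e : ι → E) (A : E → E →L[ℝ] ℝ) :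
    0 ≤ magEnergy μ e A :=
  fun _ => integral_nonneg fun _ => Finset.sum_nonneg fun _ _ => sq_nonneg _

theorem IsTestFun.magDeriv {A : E → E →L[ℝ] ℝ} {u : E → ℂ} (hu : IsTestFun u)
    (hA : ContDiff ℝ (⊤ : ℕ∞) A) (h : E) : IsTestFun fun x => magDeriv A u x h :=
  ((hu.fderiv_apply h).mul_left contDiff_const).add
    (hu.mul_left (contDiff_ofReal (hA.clm_apply contDiff_const)))

theorem magDeriv_sum_smul (A : E → E →L[ℝ] ℝ) (u : E → ℂ) (x : E) (c : ι → ℝ) (h : ι → E) :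
    magDeriv A u x (∑ i, c i • h i) = ∑ i, (c i : ℂ) * magDeriv A u x (h i) := by
  simp only [magDeriv, map_sum, map_smul, Complex.real_smul, smul_eq_mul, Complex.ofReal_sum,
    Complex.ofReal_mul, Finset.mul_sum, Finset.sum_mul, ← Finset.sum_add_distrib]
  exact Finset.sum_congr rfl fun i _ => by ring

theorem magDeriv_gauge {A : E → E →L[ℝ] ℝ} {A' : F → F →L[ℝ] ℝ} {f : E → F} {f' : E →L[ℝ] F}
    {φ : E → ℝ} {φ' : E →L[ℝ] ℝ} {u : F → ℂ} {x h : E} (hf : HasFDerivAt f f' x)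
    (hφ : HasFDerivAt φ φ' x) (hu : DifferentiableAt ℝ u (f x))
    (hA : A x h + φ' h = A' (f x) (f' h)) :
    magDeriv A (fun y => Complex.exp (φ y * I) * u (f y)) x h
      = Complex.exp (φ x * I) * magDeriv A' u (f x) (f' h) := by
  have hexp : HasFDerivAt (fun y => Complex.exp (φ y * I))
      (Complex.exp (φ x * I) • I • Complex.ofRealCLM.comp φ') x :=
    ((Complex.ofRealCLM.hasFDerivAt.comp x hφ).mul_const I).cexp
  have hmul := (hexp.fun_mul (hu.hasFDerivAt.comp x hf)).fderiv
  simp only [Function.comp_apply] at hmul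
  rw [magDeriv, magDeriv, hmul, ← hA]
  simp only [add_apply, smul_apply, ContinuousLinearMap.comp_apply, smul_eq_mul,
    Complex.ofRealCLM_apply, neg_mul, Complex.ofReal_add]
  linear_combination (-Complex.exp (φ x * I) * φ' h * u (f x)) * Complex.I_sq

theorem magDeriv_cexp_mul {A A' : E → E →L[ℝ] ℝ} {φ : E → ℝ} {u : E → ℂ} {x : E}
    (hφ : HasFDerivAt φ (A' x - A x) x) (hu : DifferentiableAt ℝ u x) (h : E) :
    magDeriv A (fun y => Complex.exp (φ y * I) * u y) x h
      = Complex.exp (φ x * I) * magDeriv A' u x h := by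
  refine magDeriv_gauge (A := A) (A' := A') (f := fun y => y) (f' := .id ℝ E) (h := h)
    (hasFDerivAt_id x) hφ hu ?_
  simp

theorem exists_hasFDerivAt_of_symmetric (B : E →L[ℝ] E →L[ℝ] ℝ) (hB : ∀ x h, B x h = B h x) :
    ∃ φ : E → ℝ, ContDiff ℝ (⊤ : ℕ∞) φ ∧ ∀ x, HasFDerivAt φ (B x) x := by
  refine ⟨fun x => 2⁻¹ * B x x, contDiff_const.mul (B.contDiff.clm_apply contDiff_id), fun x => ?_⟩
  refine ((B.hasFDerivAt_of_bilinear (hasFDerivAt_id x) (hasFDerivAt_id x)).const_mul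
    2⁻¹).congr_fderiv ?_
  ext h
  simp only [id_eq, ContinuousLinearMap.precompR_apply, ContinuousLinearMap.compL_apply,
    ContinuousLinearMap.comp_id, smul_add, add_apply, smul_apply, smul_eq_mul,
    ContinuousLinearMap.precompL_apply, ContinuousLinearMap.id_apply, hB h x]
  ring

theorem sum_sq_mulVec_of_mem_orthogonalGroup [DecidableEq ι] {R : Matrix ι ι ℝ}
    (hR : R ∈ Matrix.orthogonalGroup ι ℝ) (v : ι → ℝ) :
    ∑ i, (∑ j, R i j * v j) ^ 2 = ∑ j, v j ^ 2 := by
  have h := Matrix.dotProduct_mulVec (R.mulVec v) R v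
  rw [← Matrix.mulVec_transpose, Matrix.mulVec_mulVec, (Matrix.mem_orthogonalGroup_iff' ι ℝ).1 hR,
    Matrix.one_mulVec] at h
  simpa only [dotProduct, Matrix.mulVec, ← sq] using h

theorem sum_norm_sq_mulVec_of_mem_orthogonalGroup [DecidableEq ι] {R : Matrix ι ι ℝ}
    (hR : R ∈ Matrix.orthogonalGroup ι ℝ) (z : ι → ℂ) :
    ∑ i, ‖∑ j, (R i j : ℂ) * z j‖ ^ 2 = ∑ j, ‖z j‖ ^ 2 := by
  simp only [Complex.sq_norm, Complex.normSq_apply, ← sq, Finset.sum_add_distrib, Complex.re_sum,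
    Complex.im_sum, Complex.re_ofReal_mul, Complex.im_ofReal_mul,
    sum_sq_mulVec_of_mem_orthogonalGroup hR]

variable [MeasurableSpace E] [BorelSpace E] [MeasurableSpace F] [BorelSpace F]

theorem exists_map_restrict_preimage_eq_smul_restrict [FiniteDimensional ℝ E]
    (T : E ≃L[ℝ] F) (μ : Measure E) (ν : Measure F) [μ.IsAddHaarMeasure] [ν.IsAddHaarMeasure] :
    ∃ k : ℝ≥0, k ≠ 0 ∧ ∀ s, MeasurableSet s → (μ.restrict (T ⁻¹' s)).map T = k • ν.restrict s := by
  have : FiniteDimensional ℝ F := T.toLinearEquiv.finiteDimensional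
  have := T.isAddHaarMeasure_map μ
  refine ⟨_, (Measure.addHaarScalarFactor_pos_of_isAddHaarMeasure (μ.map T) ν).ne', fun s hs => ?_⟩
  rw [← Measure.restrict_map T.continuous.measurable hs,
    ← Measure.restrict_smul, ← Measure.isAddLeftInvariant_eq_smul (μ.map T) ν]

theorem rayleighInf_magEnergy_eq_of_hasFDerivAt {μ : Measure E} (e : ι → E) {A A' : E → E →L[ℝ] ℝ}
    {φ : E → ℝ} (hφ : ContDiff ℝ (⊤ : ℕ∞) φ) (hφ' : ∀ x, HasFDerivAt φ (A' x - A x) x) :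
    rayleighInf μ (magEnergy μ e A) = rayleighInf μ (magEnergy μ e A') := by
  refine rayleighInf_eq_of_gauge (Homeomorph.refl E) contDiff_id contDiff_id one_ne_zero
    (by simp [Measure.map_id]) hφ fun u hu => ?_
  simp [magEnergy, magDeriv_cexp_mul (hφ' _) (hu.differentiable _)]

/-- The antisymmetric part of a linear potential is its magnetic field, and two linear potentials
with the same field differ by the differential of a quadratic phase. -/
theorem rayleighInf_magEnergy_eq_of_orthogonal [DecidableEq ι] {μ : Measure E} {ν : Measure F}
    (T : E ≃L[ℝ] F) {k : ℝ≥0} (hk : k ≠ 0) (hμ : μ.map T = k • ν) {e : ι → E} {e' : ι → F}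
    {R : Matrix ι ι ℝ} (hR : R ∈ Matrix.orthogonalGroup ι ℝ) (hT : ∀ i, T (e i) = ∑ j, R i j • e' j)
    {A : E →L[ℝ] E →L[ℝ] ℝ} {A' : F →L[ℝ] F →L[ℝ] ℝ}
    (hcurl : ∀ x h, A x h - A h x = A' (T x) (T h) - A' (T h) (T x)) :
    rayleighInf μ (magEnergy μ e A) = rayleighInf ν (magEnergy ν e' A') := by
  obtain ⟨φ, hφ, hφ'⟩ := exists_hasFDerivAt_of_symmetric
    (A'.bilinearComp (T : E →L[ℝ] F) (T : E →L[ℝ] F) - A) fun x h => by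
    simp only [sub_apply, ContinuousLinearMap.bilinearComp_apply, ContinuousLinearEquiv.coe_coe]
    linear_combination -hcurl x h
  refine rayleighInf_eq_of_gauge T.toHomeomorph T.contDiff T.symm.contDiff hk hμ hφ fun u hu => ?_
  have hgauge (x h : E) : magDeriv A (fun y => Complex.exp (φ y * I) * u (T y)) x h
      = Complex.exp (φ x * I) * magDeriv A' u (T x) ((T : E →L[ℝ] F) h) := by
    refine magDeriv_gauge (A := A) (A' := A') (f := T) T.hasFDerivAt (hφ' x)
      (hu.differentiable (T x)) ?_
    simp
  have hdensity (x : E) :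
      ∑ i, ‖magDeriv A (fun y => Complex.exp (φ y * I) * u (T y)) x (e i)‖ ^ 2
        = ∑ i, ‖magDeriv A' u (T x) (e' i)‖ ^ 2 := by
    simp_rw [hgauge, norm_mul, Complex.norm_exp_ofReal_mul_I, one_mul,
      ContinuousLinearEquiv.coe_coe, hT, magDeriv_sum_smul,
      sum_norm_sq_mulVec_of_mem_orthogonalGroup hR]
  calc ∫ x, ∑ i, ‖magDeriv A (fun y => Complex.exp (φ y * I) * u (T y)) x (e i)‖ ^ 2 ∂μ
      = ∫ x, ∑ i, ‖magDeriv A' u (T x) (e' i)‖ ^ 2 ∂μ := by simp_rw [hdensity]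
    _ = ∫ y, ∑ i, ‖magDeriv A' u y (e' i)‖ ^ 2 ∂(μ.map T) :=
      (T.toHomeomorph.measurableEmbedding.integral_map
        fun y => ∑ i, ‖magDeriv A' u y (e' i)‖ ^ 2).symm
    _ = k * magEnergy ν e' A' u := by
      rw [hμ, integral_smul_nnreal_measure, NNReal.smul_def, smul_eq_mul, magEnergy]

end Magnetic

/-! ### Translation-invariant operators on `X × ℝ` -/

/-- The frame of `X × ℝ` formed by a frame of `X` and the unit vector of `ℝ`. -/
def liftFrame {X : Type*} [Zero X] {n : ℕ} (e : Fin n → X) : Fin (n + 1) → X × ℝ :=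
  Fin.snoc (α := fun _ => X × ℝ) (fun i => (e i, 0)) (0, 1)

theorem sum_liftFrame {X M : Type*} [Zero X] [AddCommMonoid M] {n : ℕ} (e : Fin n → X)
    (f : X × ℝ → M) : ∑ i, f (liftFrame e i) = ∑ i, f (e i, 0) + f (0, 1) := by
  simp [Fin.sum_univ_castSucc, liftFrame]

section Fibration

variable {X ι : Type*} [NormedAddCommGroup X] [NormedSpace ℝ X] [Fintype ι]

/-- The form `A + V dz` on `X × ℝ`, where `z` is the coordinate of the factor `ℝ` on which it
does not depend. -/
def liftPotential (A : X → X →L[ℝ] ℝ) (V : X → ℝ) (y : X × ℝ) : X × ℝ →L[ℝ] ℝ :=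
  (A y.1).comp (.fst ℝ X ℝ) + V y.1 • .snd ℝ X ℝ

theorem liftPotential_apply (A : X → X →L[ℝ] ℝ) (V : X → ℝ) (y h : X × ℝ) :
    liftPotential A V y h = A y.1 h.1 + V y.1 * h.2 :=
  rfl

theorem liftPotential_coe (A : X →L[ℝ] X →L[ℝ] ℝ) (V : X →L[ℝ] ℝ) :
    liftPotential A V = (A.bilinearComp (.fst ℝ X ℝ) (.fst ℝ X ℝ)
      + (V.comp (.fst ℝ X ℝ)).smulRight (ContinuousLinearMap.snd ℝ X ℝ) :
      X × ℝ →L[ℝ] X × ℝ →L[ℝ] ℝ) :=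
  rfl

/-- The energy `∫ (|(−i∇ + A)u|² + V²|u|²) dμ`. Replacing `V` by `V - τ`, it is the energy that the
operator `(−i∇ + A + V dz)²` on `X × ℝ` induces on functions `exp(-iτz)u(x)`. -/
def fiberEnergy [MeasurableSpace X] (μ : Measure X) (e : ι → X) (A : X → X →L[ℝ] ℝ) (V : X → ℝ)
    (u : X → ℂ) : ℝ :=
  ∫ x, (∑ i, ‖magDeriv A u x (e i)‖ ^ 2) + V x ^ 2 * ‖u x‖ ^ 2 ∂μ

theorem fiberEnergy_nonneg [MeasurableSpace X] (μ : Measure X) (e : ι → X) (A : X → X →L[ℝ] ℝ)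
    (V : X → ℝ) : 0 ≤ fiberEnergy μ e A V :=
  fun _ => integral_nonneg fun _ => by positivity

theorem contDiff_liftPotential {A : X → X →L[ℝ] ℝ} {V : X → ℝ} (hA : ContDiff ℝ (⊤ : ℕ∞) A)
    (hV : ContDiff ℝ (⊤ : ℕ∞) V) : ContDiff ℝ (⊤ : ℕ∞) (liftPotential A V) :=
  ((hA.comp contDiff_fst).clm_comp contDiff_const).add ((hV.comp contDiff_fst).smul contDiff_const)

theorem hasFDerivAt_mul_snd (c : ℝ) (y : X × ℝ) :
    HasFDerivAt (fun y : X × ℝ => c * y.2) (c • .snd ℝ X ℝ) y :=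
  hasFDerivAt_snd.const_mul c

theorem contDiff_mul_snd (c : ℝ) : ContDiff ℝ (⊤ : ℕ∞) fun y : X × ℝ => c * y.2 :=
  contDiff_const.mul contDiff_snd

theorem liftPotential_sub_liftPotential (A : X → X →L[ℝ] ℝ) (V V' : X → ℝ) (y : X × ℝ) :
    liftPotential A V y - liftPotential A V' y = (V y.1 - V' y.1) • .snd ℝ X ℝ := by
  simpa [liftPotential] using (sub_smul _ _ _).symm

theorem magDeriv_zero (A : X → X →L[ℝ] ℝ) (u : X → ℂ) (x : X) : magDeriv A u x 0 = 0 := by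
  simp [magDeriv]

theorem magDeriv_liftPotential_mul {A : X → X →L[ℝ] ℝ} {V : X → ℝ} {u : X → ℂ} {χ : ℝ → ℝ}
    {y : X × ℝ} (hu : DifferentiableAt ℝ u y.1) (hχ : DifferentiableAt ℝ χ y.2) (h : X) (s : ℝ) :
    magDeriv (liftPotential A V) (fun y => χ y.2 * u y.1) y (h, s)
      = χ y.2 * (magDeriv A u y.1 h + (s * V y.1 : ℝ) * u y.1)
        - I * (s * deriv χ y.2 : ℝ) * u y.1 := by
  have hχ' : HasFDerivAt (fun y : X × ℝ => (χ y.2 : ℂ)) _ y :=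
    (Complex.ofRealCLM.hasFDerivAt.comp y.2 hχ.hasFDerivAt).comp y hasFDerivAt_snd
  have hmul := (hχ'.fun_mul (hu.hasFDerivAt.comp y hasFDerivAt_fst)).fderiv
  simp only [Function.comp_apply] at hmul
  rw [magDeriv, hmul, magDeriv]
  simp only [add_apply, smul_apply, ContinuousLinearMap.comp_apply, ContinuousLinearMap.coe_fst',
    smul_eq_mul, ContinuousLinearMap.coe_snd', fderiv_eq_smul_deriv, Complex.ofRealCLM_apply,
    Complex.ofReal_mul, neg_mul, liftPotential, Complex.ofReal_add]
  ring

theorem sum_norm_sq_magDeriv_liftPotential_mul {A : X → X →L[ℝ] ℝ} {V : X → ℝ} {u : X → ℂ}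
    {χ : ℝ → ℝ} {y : X × ℝ} (hu : DifferentiableAt ℝ u y.1) (hχ : DifferentiableAt ℝ χ y.2)
    {n : ℕ} (e : Fin n → X) :
    ∑ i, ‖magDeriv (liftPotential A V) (fun y => χ y.2 * u y.1) y (liftFrame e i)‖ ^ 2
      = ((∑ i, ‖magDeriv A u y.1 (e i)‖ ^ 2) + V y.1 ^ 2 * ‖u y.1‖ ^ 2) * χ y.2 ^ 2
        + ‖u y.1‖ ^ 2 * deriv χ y.2 ^ 2 := by
  have hvertical : ‖χ y.2 * ((V y.1 : ℂ) * u y.1) - I * deriv χ y.2 * u y.1‖ ^ 2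
      = V y.1 ^ 2 * ‖u y.1‖ ^ 2 * χ y.2 ^ 2 + ‖u y.1‖ ^ 2 * deriv χ y.2 ^ 2 := by
    simp only [Complex.sq_norm, Complex.normSq_apply, Complex.sub_re, Complex.sub_im,
      Complex.mul_re, Complex.mul_im, Complex.ofReal_re, Complex.ofReal_im, Complex.I_re,
      Complex.I_im]
    ring
  rw [sum_liftFrame (f := fun h =>
    ‖magDeriv (liftPotential A V) (fun y => χ y.2 * u y.1) y h‖ ^ 2)]
  simp only [magDeriv_liftPotential_mul hu hχ, zero_mul, one_mul, Complex.ofReal_zero, mul_zero,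
    add_zero, sub_zero, magDeriv_zero, zero_add, hvertical, norm_mul, Complex.norm_real,
    Real.norm_eq_abs, mul_pow, sq_abs, ← Finset.mul_sum]
  ring

theorem IsTestFun.tensor {χ : ℝ → ℝ} {u : X → ℂ} (hχ : ContDiff ℝ (⊤ : ℕ∞) χ)
    (hχ' : HasCompactSupport χ) (hu : IsTestFun u) :
    IsTestFun fun y : X × ℝ => χ y.2 * u y.1 where
  contDiff := (contDiff_ofReal (hχ.comp contDiff_snd)).mul (hu.contDiff.comp contDiff_fst)
  hasCompactSupport := by
    refine HasCompactSupport.intro (hu.hasCompactSupport.isCompact.prod hχ'.isCompact)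
      fun y hy => ?_
    obtain hy | hy := not_and_or.1 hy
    · simp [image_eq_zero_of_notMem_tsupport hy]
    · simp [image_eq_zero_of_notMem_tsupport hy]

variable [MeasurableSpace X] [BorelSpace X]

theorem rayleighInf_magEnergy_liftPotential_sub_const (ν : Measure (X × ℝ)) (e : ι → X × ℝ)
    (A : X → X →L[ℝ] ℝ) (V : X → ℝ) (τ : ℝ) :
    rayleighInf ν (magEnergy ν e (liftPotential A fun x => V x - τ))
      = rayleighInf ν (magEnergy ν e (liftPotential A V)) :=
  rayleighInf_magEnergy_eq_of_hasFDerivAt e (contDiff_mul_snd τ) fun y => by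
    simpa [liftPotential_sub_liftPotential] using hasFDerivAt_mul_snd τ y

theorem rayleighInf_fiberEnergy_sub_const (μ : Measure X) {v : X}
    (hμ : MeasurePreserving (· + v) μ μ) (e : ι → X) (A : X →L[ℝ] X →L[ℝ] ℝ) (V : X →L[ℝ] ℝ)
    (τ : ℝ) :
    rayleighInf μ (fiberEnergy μ e A fun x => V x - τ)
      = rayleighInf μ (fiberEnergy μ e A fun x => V x - (τ + V v)) := by
  refine rayleighInf_eq_of_gauge (Homeomorph.addRight v) (contDiff_id.add contDiff_const)
    (contDiff_id.add contDiff_const) one_ne_zero (by simpa using hμ.map_eq) (A v).contDiff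
    fun u hu => ?_
  have hgauge (x h : X) : magDeriv A (fun y => Complex.exp (A v y * I) * u (y + v)) x h
      = Complex.exp (A v x * I) * magDeriv A u (x + v) h := by
    refine magDeriv_gauge (A := A) (A' := A) (f := (· + v)) (f' := .id ℝ X) (h := h)
      ((hasFDerivAt_id x).add_const v) (A v).hasFDerivAt (hu.differentiable _) ?_
    simp
  let density : X → ℝ := fun y =>
    (∑ i, ‖magDeriv A u y (e i)‖ ^ 2) + (V y - (τ + V v)) ^ 2 * ‖u y‖ ^ 2
  have hdensity (x : X) : (∑ i, ‖magDeriv A (fun y => Complex.exp (A v y * I) * u (y + v)) x (e i)‖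
      ^ 2) + (V x - τ) ^ 2 * ‖Complex.exp (A v x * I) * u (x + v)‖ ^ 2 = density (x + v) := by
    simp [density, hgauge, Complex.norm_exp_ofReal_mul_I]
  calc fiberEnergy μ e A (fun x => V x - τ) (fun x => Complex.exp (A v x * I) * u (x + v))
      = ∫ x, density (x + v) ∂μ := by simp_rw [fiberEnergy, hdensity]
    _ = ∫ y, density y ∂μ :=
      hμ.integral_comp (Homeomorph.addRight v).measurableEmbedding density
    _ = (1 : ℝ≥0) * fiberEnergy μ e A (fun x => V x - (τ + V v)) u := by simp [density, fiberEnergy]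

theorem rayleighInf_fiberEnergy_eq_of_measurePreserving (μ : Measure X) {v : X}
    (hμ : ∀ r : ℝ, MeasurePreserving (· + r • v) μ μ) (e : ι → X) (A : X →L[ℝ] X →L[ℝ] ℝ)
    {V : X →L[ℝ] ℝ} (hV : V v ≠ 0) (τ τ' : ℝ) :
    rayleighInf μ (fiberEnergy μ e A fun x => V x - τ)
      = rayleighInf μ (fiberEnergy μ e A fun x => V x - τ') := by
  rw [rayleighInf_fiberEnergy_sub_const μ (hμ ((τ' - τ) / V v)) e A V τ, map_smul, smul_eq_mul,
    div_mul_cancel₀ _ hV, add_sub_cancel]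

/-! ### Upper bound by cutoff -/

theorem exists_cutoff {ε : ℝ} (hε : 0 < ε) : ∃ χ : ℝ → ℝ, ContDiff ℝ (⊤ : ℕ∞) χ ∧
    HasCompactSupport χ ∧ 0 < ∫ z, χ z ^ 2 ∧ ∫ z, deriv χ z ^ 2 ≤ ε * ∫ z, χ z ^ 2 := by
  let f : ContDiffBump (0 : ℝ) := default
  have hmass : 0 < ∫ z, f z ^ 2 :=
    (f.continuous.pow 2).integral_pos_of_hasCompactSupport_nonneg_nonzero (x := 0)
      (f.hasCompactSupport.comp_left (g := (· ^ 2)) (by simp)) (fun _ => sq_nonneg _)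
      (by simp [f.one_of_mem_closedBall (Metric.mem_closedBall_self f.rIn_pos.le)])
  let c := √(ε * (∫ z, f z ^ 2) / ((∫ z, deriv f z ^ 2) + 1))
  have henergy : 0 ≤ ∫ z, deriv f z ^ 2 := integral_nonneg fun _ => sq_nonneg _
  have hc : 0 < c := Real.sqrt_pos.2 (by positivity)
  have hscale (g : ℝ → ℝ) : ∫ z, g (c * z) = c⁻¹ * ∫ z, g z := by
    rw [Measure.integral_comp_mul_left, abs_of_pos (inv_pos.2 hc), smul_eq_mul]
  refine ⟨fun z => f (c * z), f.contDiff.comp (contDiff_const.mul contDiff_id),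
    f.hasCompactSupport.comp_homeomorph (Homeomorph.mulLeft₀ c hc.ne'), ?_, ?_⟩
  · rw [hscale fun z => f z ^ 2]
    positivity
  · simp_rw [deriv_comp_mul_left, smul_eq_mul, mul_pow]
    rw [integral_const_mul, hscale fun z => deriv f z ^ 2, hscale fun z => f z ^ 2,
      Real.sq_sqrt (by positivity)]
    have hbound : (∫ z, deriv f z ^ 2) / ((∫ z, deriv f z ^ 2) + 1) ≤ 1 :=
      div_le_one_of_le₀ (by linarith) (by linarith)
    calc _ = ε * (c⁻¹ * ∫ z, f z ^ 2) * ((∫ z, deriv f z ^ 2) / ((∫ z, deriv f z ^ 2) + 1)) := by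
          ring
      _ ≤ ε * (c⁻¹ * ∫ z, f z ^ 2) := mul_le_of_le_one_right (by positivity) hbound

theorem integrable_sq_of_hasCompactSupport {f : ℝ → ℝ} (hf : Continuous f)
    (hf' : HasCompactSupport f) : Integrable fun z => f z ^ 2 := by
  simp_rw [sq]
  exact (hf.mul hf).integrable_of_hasCompactSupport hf'.mul_left

theorem integrable_fiberEnergy {u : X → ℂ} (hu : IsTestFun u) (μ : Measure X)
    [IsFiniteMeasureOnCompacts μ] (e : ι → X) {A : X → X →L[ℝ] ℝ} (hA : ContDiff ℝ (⊤ : ℕ∞) A)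
    {V : X → ℝ} (hV : ContDiff ℝ (⊤ : ℕ∞) V) :
    Integrable (fun x => (∑ i, ‖magDeriv A u x (e i)‖ ^ 2) + V x ^ 2 * ‖u x‖ ^ 2) μ := by
  have hpot := (hu.mul_left (contDiff_ofReal hV)).integrable_norm_sq μ
  simp only [norm_mul, Complex.norm_real, Real.norm_eq_abs, mul_pow, sq_abs] at hpot
  exact (integrable_finsetSum _ fun i _ =>
    (hu.magDeriv hA (e i)).integrable_norm_sq μ).add hpot

theorem magEnergy_liftPotential_mul {u : X → ℂ} (hu : IsTestFun u) {χ : ℝ → ℝ}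
    (hχ : ContDiff ℝ (⊤ : ℕ∞) χ) (hχ' : HasCompactSupport χ) (μ : Measure X)
    [SFinite μ] [IsFiniteMeasureOnCompacts μ] {n : ℕ} (e : Fin n → X) {A : X → X →L[ℝ] ℝ}
    (hA : ContDiff ℝ (⊤ : ℕ∞) A) {V : X → ℝ} (hV : ContDiff ℝ (⊤ : ℕ∞) V) :
    magEnergy (μ.prod volume) (liftFrame e) (liftPotential A V) (fun y => χ y.2 * u y.1)
      = fiberEnergy μ e A V u * (∫ z, χ z ^ 2) + (∫ x, ‖u x‖ ^ 2 ∂μ) * ∫ z, deriv χ z ^ 2 := by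
  have hmass := integrable_sq_of_hasCompactSupport hχ.continuous hχ'
  have henergy := integrable_sq_of_hasCompactSupport (hχ.continuous_deriv (by simp)) hχ'.deriv
  have hdensity (y : X × ℝ) := sum_norm_sq_magDeriv_liftPotential_mul (A := A) (V := V)
    (hu.differentiable y.1) (hχ.differentiable (by simp) y.2) e
  simp_rw [magEnergy, fiberEnergy, hdensity, ← integral_prod_mul]
  exact integral_add ((integrable_fiberEnergy hu μ e hA hV).mul_prod hmass)
    ((hu.integrable_norm_sq μ).mul_prod henergy)

theorem rayleighInf_magEnergy_liftPotential_le [FiniteDimensional ℝ X] {μ : Measure X} [SFinite μ]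
    [IsFiniteMeasureOnCompacts μ] (hμ : μ ≠ 0) {n : ℕ} (e : Fin n → X) {A : X → X →L[ℝ] ℝ}
    (hA : ContDiff ℝ (⊤ : ℕ∞) A) {V : X → ℝ} (hV : ContDiff ℝ (⊤ : ℕ∞) V) :
    rayleighInf (μ.prod volume) (magEnergy (μ.prod volume) (liftFrame e) (liftPotential A V))
      ≤ rayleighInf μ (fiberEnergy μ e A V) := by
  refine le_rayleighInf hμ fun u hu => le_of_forall_pos_le_add fun δ hδ => ?_
  let N := ∫ x, ‖u x‖ ^ 2 ∂μ
  have hN : 0 ≤ N := integral_nonneg fun _ => sq_nonneg _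
  obtain ⟨χ, hχ, hχ', hmass, henergy⟩ := exists_cutoff (ε := δ / (N + 1)) (by positivity)
  have hnorm : ∫ y : X × ℝ, ‖(χ y.2 : ℂ) * u y.1‖ ^ 2 ∂(μ.prod volume) = N * ∫ z, χ z ^ 2 := by
    rw [← integral_prod_mul]
    simp [mul_pow, mul_comm]
  have hle := rayleighInf_mul_le (magEnergy_nonneg (μ.prod volume) (liftFrame e)
    (liftPotential A V)) (hu.tensor hχ hχ') (μ := μ.prod volume)
  rw [hnorm, magEnergy_liftPotential_mul hu hχ hχ' μ e hA hV, ← mul_assoc] at hle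
  have hδN : N * (δ / (N + 1)) ≤ δ := by
    rw [mul_div_left_comm]
    exact mul_le_of_le_one_right hδ.le (div_le_one_of_le₀ (by linarith) (by linarith))
  refine le_of_mul_le_mul_right (hle.trans ?_) hmass
  calc fiberEnergy μ e A V u * (∫ z, χ z ^ 2) + N * ∫ z, deriv χ z ^ 2
      ≤ fiberEnergy μ e A V u * (∫ z, χ z ^ 2) + N * (δ / (N + 1) * ∫ z, χ z ^ 2) := by gcongr
    _ = (fiberEnergy μ e A V u + N * (δ / (N + 1))) * ∫ z, χ z ^ 2 := by ring
    _ ≤ (fiberEnergy μ e A V u + δ) * ∫ z, χ z ^ 2 := by gcongr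

end Fibration

/-! ### Lower bound by partial Fourier transform -/

/-- The integral of `g` along the factor `ℝ`. -/
def fiberIntegral {X : Type*} (g : X × ℝ → ℂ) (x : X) : ℂ :=
  ∫ z, g (x, z)

theorem fiberIntegral_eq_convolution {X : Type*} (g : X × ℝ → ℂ) (y : X × ℝ) :
    fiberIntegral g y.1 = (convolution (fun _ => (1 : ℝ)) (fun z => g (y.1, z))
      (ContinuousLinearMap.lsmul ℝ ℝ) volume) y.2 := by
  simp [convolution_def, fiberIntegral, integral_sub_left_eq_self (fun z => g (y.1, z))]

/-- The Fourier transform of `g` at frequency `ξ` along the factor `ℝ`. -/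
def partialFourier {X : Type*} (g : X × ℝ → ℂ) (ξ : ℝ) (x : X) : ℂ :=
  fiberIntegral (fun y => Complex.exp ((-(2 * π * ξ) * y.2 : ℝ) * I) * g y) x

theorem partialFourier_eq_fourier {X : Type*} (g : X × ℝ → ℂ) (ξ : ℝ) (x : X) :
    partialFourier g ξ x = FourierTransform.fourier (fun z => g (x, z)) ξ := by
  rw [Real.fourier_real_eq_integral_exp_smul, partialFourier, fiberIntegral]
  congr! 5
  push_cast
  ring

theorem stronglyMeasurable_uncurry_partialFourier {X : Type*} [TopologicalSpace X]
    [MeasurableSpace X] [BorelSpace X] {g : X × ℝ → ℂ} (hg : Continuous g) :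
    StronglyMeasurable fun y : X × ℝ => partialFourier g y.2 y.1 := by
  have hcont : Continuous fun p : (X × ℝ) × ℝ =>
      Complex.exp ((-(2 * π * p.1.2) * p.2 : ℝ) * I) * g (p.1.1, p.2) := by fun_prop
  exact hcont.stronglyMeasurable.integral_prod_right

theorem lintegral_enorm_sq_fourier (f : SchwartzMap ℝ ℂ) :
    ∫⁻ ξ, ‖FourierTransform.fourier f ξ‖ₑ ^ 2 = ∫⁻ z, ‖f z‖ₑ ^ 2 := by
  have hint (f : SchwartzMap ℝ ℂ) : ∫⁻ z, ‖f z‖ₑ ^ 2 = ENNReal.ofReal (∫ z, ‖f z‖ ^ 2) := by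
    have hf : Integrable (fun z => ‖f z‖ ^ 2) volume := by
      simpa using (f.memLp 2).integrable_norm_pow (by simp)
    rw [ofReal_integral_eq_lintegral_ofReal hf (Eventually.of_forall fun _ => sq_nonneg _)]
    simp_rw [ENNReal.ofReal_pow (norm_nonneg _), ofReal_norm]
  rw [hint, hint, SchwartzMap.integral_norm_sq_fourier]

theorem apply_eq_zero_of_notMem_image_snd_tsupport {X M : Type*} [TopologicalSpace X] [Zero M]
    {g : X × ℝ → M} {z : ℝ} (hz : z ∉ Prod.snd '' tsupport g) (x : X) : g (x, z) = 0 :=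
  image_eq_zero_of_notMem_tsupport fun h => hz ⟨(x, z), h, rfl⟩

theorem hasCompactSupport_slice {X M : Type*} [TopologicalSpace X] [Zero M] {g : X × ℝ → M}
    (hg : HasCompactSupport g) (x : X) : HasCompactSupport fun z => g (x, z) :=
  HasCompactSupport.intro (hg.isCompact.image continuous_snd)
    fun _ hz => apply_eq_zero_of_notMem_image_snd_tsupport hz x

section PartialFourier

variable {X : Type*} [NormedAddCommGroup X] [NormedSpace ℝ X] {g w : X × ℝ → ℂ}

theorem IsTestFun.slice (hg : IsTestFun g) (x : X) : IsTestFun fun z => g (x, z) :=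
  ⟨hg.contDiff.comp (contDiff_prodMk_right x), hasCompactSupport_slice hg.hasCompactSupport x⟩

theorem isTestFun_fiberIntegral (hg : IsTestFun g) : IsTestFun (fiberIntegral g) where
  contDiff := by
    have hconv := contDiffOn_convolution_right_with_param_comp (μ := volume)
      (ContinuousLinearMap.lsmul ℝ ℝ) (s := univ) (v := fun _ => (0 : ℝ)) contDiffOn_const
      (f := fun _ => (1 : ℝ)) (g := fun x z => g (x, z)) isOpen_univ
      (hg.hasCompactSupport.isCompact.image continuous_snd)
      (fun x z _ hz => apply_eq_zero_of_notMem_image_snd_tsupport hz x)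
      (locallyIntegrable_const 1) hg.contDiff.contDiffOn
    exact contDiffOn_univ.1
      (hconv.congr fun x _ => fiberIntegral_eq_convolution g (x, 0))
  hasCompactSupport := HasCompactSupport.intro (hg.hasCompactSupport.isCompact.image continuous_fst)
    fun x hx => by
      have hslice (z : ℝ) : g (x, z) = 0 :=
        image_eq_zero_of_notMem_tsupport fun h => hx ⟨(x, z), h, rfl⟩
      simp [fiberIntegral, hslice]

theorem fderiv_fiberIntegral (hg : IsTestFun g) (x h : X) (s : ℝ) :
    fderiv ℝ (fiberIntegral g) x h = fiberIntegral (fun y => fderiv ℝ g y (h, s)) x := by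
  have hconv := hasFDerivAt_convolution_right_with_param (μ := volume)
    (ContinuousLinearMap.lsmul ℝ ℝ) (s := (univ : Set X)) (f := fun _ => (1 : ℝ))
    (g := fun x z => g (x, z)) isOpen_univ (hg.hasCompactSupport.isCompact.image continuous_snd)
    (fun x z _ hz => apply_eq_zero_of_notMem_image_snd_tsupport hz x)
    (locallyIntegrable_const 1) (hg.contDiff.of_le (by simp)).contDiffOn (x, 0) (mem_univ _)
  simp_rw [← fiberIntegral_eq_convolution] at hconv
  have hcomp := ((isTestFun_fiberIntegral hg).differentiable x).hasFDerivAt.comp (x, (0 : ℝ))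
    (hasFDerivAt_fst (𝕜 := ℝ) (p := (x, (0 : ℝ))))
  have hint : Integrable fun z => fderiv ℝ g (x, z) :=
    ((hg.contDiff.continuous_fderiv (by simp)).comp
      (Continuous.prodMk_right x)).integrable_of_hasCompactSupport
      (hasCompactSupport_slice (hg.hasCompactSupport.fderiv ℝ) x)
  have hsmul (L : X × ℝ →L[ℝ] ℂ) : (ContinuousLinearMap.lsmul ℝ ℝ (1 : ℝ)).comp L = L :=
    ContinuousLinearMap.ext fun v => one_smul ℝ (L v)
  have happly : fderiv ℝ (fiberIntegral g) x h = (∫ z, fderiv ℝ g (x, -z)) (h, s) := by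
    simpa [convolution_def, hsmul, Function.HasUncurry.uncurry]
      using DFunLike.congr_fun (hcomp.unique hconv) (h, s)
  rw [happly, integral_neg_eq_self fun z => fderiv ℝ g (x, z)]
  exact ContinuousLinearMap.integral_apply hint _

theorem fiberIntegral_magDeriv_liftPotential (hg : IsTestFun g) (A : X → X →L[ℝ] ℝ) (V : X → ℝ)
    (x h : X) (s : ℝ) :
    fiberIntegral (fun y => magDeriv (liftPotential A V) g y (h, s)) x
      = magDeriv A (fiberIntegral g) x h + (V x * s : ℝ) * fiberIntegral g x := by
  have hderiv : Integrable fun z => fderiv ℝ g (x, z) (h, s) :=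
    ((hg.fderiv_apply (h, s)).slice x).continuous.integrable_of_hasCompactSupport
      ((hg.fderiv_apply (h, s)).slice x).hasCompactSupport
  have hint : Integrable fun z => g (x, z) :=
    (hg.slice x).continuous.integrable_of_hasCompactSupport (hg.slice x).hasCompactSupport
  calc ∫ z, magDeriv (liftPotential A V) g (x, z) (h, s)
      = ∫ z, -I * fderiv ℝ g (x, z) (h, s) + (A x h + V x * s : ℝ) * g (x, z) := by
        simp [magDeriv, liftPotential]
    _ = -I * fderiv ℝ (fiberIntegral g) x h + (A x h + V x * s : ℝ) * fiberIntegral g x := by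
        rw [integral_add (hderiv.const_mul _) (hint.const_mul _), integral_const_mul,
          integral_const_mul, fderiv_fiberIntegral hg x h s, fiberIntegral, fiberIntegral]
    _ = _ := by
        push_cast [magDeriv]
        ring

theorem IsTestFun.cexp_mul_snd_mul (hg : IsTestFun g) (c : ℝ) :
    IsTestFun fun y => Complex.exp ((c * y.2 : ℝ) * I) * g y :=
  hg.mul_left (contDiff_cexp_ofReal_mul_I (contDiff_mul_snd c))

theorem isTestFun_partialFourier (hg : IsTestFun g) (ξ : ℝ) : IsTestFun (partialFourier g ξ) :=
  isTestFun_fiberIntegral (hg.cexp_mul_snd_mul _)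

theorem partialFourier_magDeriv_liftPotential (hw : IsTestFun w) (A : X → X →L[ℝ] ℝ) (V : X → ℝ)
    (ξ : ℝ) (x h : X) (s : ℝ) :
    partialFourier (fun y => magDeriv (liftPotential A V) w y (h, s)) ξ x
      = magDeriv A (partialFourier w ξ) x h
        + ((V x + 2 * π * ξ) * s : ℝ) * partialFourier w ξ x := by
  have hgauge (y : X × ℝ) : Complex.exp ((-(2 * π * ξ) * y.2 : ℝ) * I)
        * magDeriv (liftPotential A V) w y (h, s)
      = magDeriv (liftPotential A fun x => V x + 2 * π * ξ)
          (fun y => Complex.exp ((-(2 * π * ξ) * y.2 : ℝ) * I) * w y) y (h, s) := by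
    refine (magDeriv_cexp_mul (A := liftPotential A fun x => V x + 2 * π * ξ)
      (φ := fun y => -(2 * π * ξ) * y.2) ?_ (hw.differentiable y) (h, s)).symm
    rw [liftPotential_sub_liftPotential, sub_add_cancel_left]
    exact hasFDerivAt_mul_snd _ y
  simp_rw [partialFourier, hgauge]
  exact fiberIntegral_magDeriv_liftPotential (hw.cexp_mul_snd_mul _) A _ x h s

theorem lintegral_enorm_sq_partialFourier (hg : IsTestFun g) (x : X) :
    ∫⁻ ξ, ‖partialFourier g ξ x‖ₑ ^ 2 = ∫⁻ z, ‖g (x, z)‖ₑ ^ 2 := by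
  have hslice := hg.slice x
  let f := hslice.hasCompactSupport.toSchwartzMap hslice.contDiff
  calc ∫⁻ ξ, ‖partialFourier g ξ x‖ₑ ^ 2 = ∫⁻ ξ, ‖FourierTransform.fourier f ξ‖ₑ ^ 2 := by
        simp_rw [partialFourier_eq_fourier, SchwartzMap.fourier_coe]
        rfl
    _ = ∫⁻ z, ‖g (x, z)‖ₑ ^ 2 := lintegral_enorm_sq_fourier f

variable [MeasurableSpace X] [BorelSpace X] {μ : Measure X}

theorem lintegral_lintegral_enorm_sq_partialFourier [SFinite μ] (hg : IsTestFun g) :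
    ∫⁻ ξ, ∫⁻ x, ‖partialFourier g ξ x‖ₑ ^ 2 ∂μ = ∫⁻ y, ‖g y‖ₑ ^ 2 ∂(μ.prod volume) := by
  have hmeas :=
    (stronglyMeasurable_uncurry_partialFourier hg.continuous).measurable.enorm.pow_const 2
  rw [← lintegral_lintegral_swap (f := fun x ξ => ‖partialFourier g ξ x‖ₑ ^ 2) hmeas.aemeasurable,
    lintegral_prod _ (hg.continuous.measurable.enorm.pow_const 2).aemeasurable]
  simp_rw [lintegral_enorm_sq_partialFourier hg]

theorem ofReal_fiberEnergy_partialFourier [IsFiniteMeasureOnCompacts μ] (hw : IsTestFun w)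
    {n : ℕ} (e : Fin n → X) {A : X → X →L[ℝ] ℝ} (hA : ContDiff ℝ (⊤ : ℕ∞) A) {V : X → ℝ}
    (hV : ContDiff ℝ (⊤ : ℕ∞) V) (ξ : ℝ) :
    ENNReal.ofReal (fiberEnergy μ e A (fun x => V x + 2 * π * ξ) (partialFourier w ξ))
      = ∑ j, ∫⁻ x,
          ‖partialFourier (fun y => magDeriv (liftPotential A V) w y (liftFrame e j)) ξ x‖ₑ ^ 2
            ∂μ := by
  rw [← ofReal_integral_sum_norm_sq μ fun j =>
    isTestFun_partialFourier (hw.magDeriv (contDiff_liftPotential hA hV) (liftFrame e j)) ξ,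
    fiberEnergy]
  congr! 3 with x
  rw [sum_liftFrame (f := fun h =>
    ‖partialFourier (fun y => magDeriv (liftPotential A V) w y h) ξ x‖ ^ 2)]
  simp [partialFourier_magDeriv_liftPotential hw, magDeriv_zero, mul_pow, -Complex.ofReal_add,
    Complex.norm_real]

theorem mul_integral_norm_sq_le_magEnergy_liftPotential [SFinite μ] [IsFiniteMeasureOnCompacts μ]
    {l : ℝ} (hl : 0 ≤ l) {n : ℕ} {e : Fin n → X} {A : X → X →L[ℝ] ℝ}
    (hA : ContDiff ℝ (⊤ : ℕ∞) A) {V : X → ℝ} (hV : ContDiff ℝ (⊤ : ℕ∞) V)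
    (hle : ∀ τ, l ≤ rayleighInf μ (fiberEnergy μ e A fun x => V x - τ)) (hw : IsTestFun w) :
    l * ∫ y, ‖w y‖ ^ 2 ∂(μ.prod volume)
      ≤ magEnergy (μ.prod volume) (liftFrame e) (liftPotential A V) w := by
  have hfiber (ξ : ℝ) : ENNReal.ofReal l * ∫⁻ x, ‖partialFourier w ξ x‖ₑ ^ 2 ∂μ
      ≤ ENNReal.ofReal (fiberEnergy μ e A (fun x => V x + 2 * π * ξ) (partialFourier w ξ)) := by
    have hw' := isTestFun_partialFourier hw ξ
    rw [← hw'.ofReal_integral_norm_sq μ, ← ENNReal.ofReal_mul hl]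
    refine ENNReal.ofReal_le_ofReal ?_
    have hξ : l ≤ rayleighInf μ (fiberEnergy μ e A fun x => V x + 2 * π * ξ) := by
      simpa only [sub_neg_eq_add] using hle (-(2 * π * ξ))
    exact (mul_le_mul_of_nonneg_right hξ (integral_nonneg fun _ => sq_nonneg _)).trans
      (rayleighInf_mul_le (fiberEnergy_nonneg μ e A _) hw')
  have hcomp (j : Fin (n + 1)) :=
    hw.magDeriv (contDiff_liftPotential hA hV) (liftFrame e j)
  refine (ENNReal.ofReal_le_ofReal_iff (magEnergy_nonneg _ _ _ w)).1 ?_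
  calc ENNReal.ofReal (l * ∫ y, ‖w y‖ ^ 2 ∂(μ.prod volume))
      = ∫⁻ ξ, ENNReal.ofReal l * ∫⁻ x, ‖partialFourier w ξ x‖ₑ ^ 2 ∂μ := by
        rw [ENNReal.ofReal_mul hl, hw.ofReal_integral_norm_sq (μ.prod volume),
          ← lintegral_lintegral_enorm_sq_partialFourier hw,
          lintegral_const_mul' _ _ ENNReal.ofReal_ne_top]
    _ ≤ ∫⁻ ξ, ENNReal.ofReal (fiberEnergy μ e A (fun x => V x + 2 * π * ξ) (partialFourier w ξ)) :=
        lintegral_mono hfiber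
    _ = ∑ j, ∫⁻ y, ‖magDeriv (liftPotential A V) w y (liftFrame e j)‖ₑ ^ 2 ∂(μ.prod volume) := by
        simp_rw [ofReal_fiberEnergy_partialFourier hw e hA hV]
        rw [lintegral_finsetSum _ fun j _ => (stronglyMeasurable_uncurry_partialFourier
          (hcomp j).continuous).measurable.enorm.pow_const 2 |>.lintegral_prod_left']
        simp_rw [lintegral_lintegral_enorm_sq_partialFourier (hcomp _)]
    _ = ENNReal.ofReal (magEnergy (μ.prod volume) (liftFrame e) (liftPotential A V) w) :=
        (ofReal_integral_sum_norm_sq _ hcomp).symm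

theorem rayleighInf_magEnergy_liftPotential_eq_iInf [FiniteDimensional ℝ X] [SFinite μ]
    [IsFiniteMeasureOnCompacts μ] (hμ : μ ≠ 0) {n : ℕ} (e : Fin n → X) {A : X → X →L[ℝ] ℝ}
    (hA : ContDiff ℝ (⊤ : ℕ∞) A) {V : X → ℝ} (hV : ContDiff ℝ (⊤ : ℕ∞) V) :
    rayleighInf (μ.prod volume) (magEnergy (μ.prod volume) (liftFrame e) (liftPotential A V))
      = ⨅ τ : ℝ, rayleighInf μ (fiberEnergy μ e A fun x => V x - τ) := by
  have hnonneg (τ : ℝ) : 0 ≤ rayleighInf μ (fiberEnergy μ e A fun x => V x - τ) :=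
    rayleighInf_nonneg (fiberEnergy_nonneg μ e A _)
  refine le_antisymm (le_ciInf fun τ => ?_) (le_rayleighInf ?_ fun w hw => ?_)
  · rw [← rayleighInf_magEnergy_liftPotential_sub_const _ _ A V τ]
    exact rayleighInf_magEnergy_liftPotential_le hμ e hA (hV.sub contDiff_const)
  · rw [← Measure.measure_univ_ne_zero, ← univ_prod_univ, Measure.prod_prod]
    simp [hμ]
  · exact mul_integral_norm_sq_le_magEnergy_liftPotential (Real.iInf_nonneg hnonneg) hA hV
      (fun τ => ciInf_le ⟨0, forall_mem_range.2 hnonneg⟩ τ) hw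

end PartialFourier

/-! ### Half-planes and half-spaces -/

theorem exists_eq_mul_cos_and_eq_mul_sin {a b r : ℝ} (h : a ^ 2 + b ^ 2 = r ^ 2) :
    ∃ ψ : ℝ, a = r * Real.cos ψ ∧ b = r * Real.sin ψ := by
  let z : ℂ := ⟨a, b⟩
  have hz : ‖z‖ = |r| := by
    rw [← Real.sqrt_sq_eq_abs, ← h, Complex.norm_eq_sqrt_sq_add_sq]
  have hre : |r| * Real.cos z.arg = a := hz ▸ Complex.norm_mul_cos_arg z
  have him : |r| * Real.sin z.arg = b := hz ▸ Complex.norm_mul_sin_arg z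
  obtain hr | hr := abs_choice r
  · exact ⟨z.arg, by rw [← hre, hr], by rw [← him, hr]⟩
  · exact ⟨z.arg + π, by rw [← hre, hr, Real.cos_add_pi]; ring,
      by rw [← him, hr, Real.sin_add_pi]; ring⟩

/-- The open half-plane with boundary direction `(cos β, −sin β)` and inner normal
`(sin β, cos β)`. -/
def halfPlane (β : ℝ) : Set (ℝ × ℝ) :=
  {x | 0 < x.1 * Real.sin β + x.2 * Real.cos β}

theorem isOpen_halfPlane (β : ℝ) : IsOpen (halfPlane β) :=
  isOpen_lt continuous_const (by fun_prop)

theorem hpLow_eq_halfPlane {α : ℝ} (hα : 0 < Real.cos (α / 2)) : hpLow α = halfPlane (α / 2) := by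
  ext x
  have hfactor : x.1 * Real.sin (α / 2) + x.2 * Real.cos (α / 2)
      = (x.2 - -(x.1 * Real.tan (α / 2))) * Real.cos (α / 2) := by
    rw [Real.tan_eq_sin_div_cos]
    field_simp
    ring
  simp only [hpLow, halfPlane, mem_ofPred_eq, hfactor, mul_pos_iff_of_pos_right hα, sub_pos]

/-- The orthonormal frame of the plane. -/
def planeFrame : Fin 2 → ℝ × ℝ := ![(1, 0), (0, 1)]

/-- The orthonormal frame of the space containing `halfSpace3`. -/
def spaceFrame : Fin 3 → ℝ × ℝ × ℝ := ![(1, 0, 0), (0, 1, 0), (0, 0, 1)]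

/-- The form `x₂b dx₁`, opposite to a potential of the planar magnetic field `b`. It is encoded as a
bilinear form because its value at `x` is linear in `x`. -/
def planePotential (b : ℝ) : ℝ × ℝ →L[ℝ] ℝ × ℝ →L[ℝ] ℝ :=
  (b • ContinuousLinearMap.snd ℝ ℝ ℝ).smulRight (ContinuousLinearMap.fst ℝ ℝ ℝ)

theorem planePotential_apply (b : ℝ) (x h : ℝ × ℝ) : planePotential b x h = b * x.2 * h.1 :=
  rfl

/-- The linear form `x₁b₂ − x₂b₁`, whose shifts by `τ` have the electric potentials of `energy2D` as
squares. -/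
def electricForm (b1 b2 : ℝ) : ℝ × ℝ →L[ℝ] ℝ :=
  b2 • .fst ℝ ℝ ℝ - b1 • .snd ℝ ℝ ℝ

theorem electricForm_apply (b1 b2 : ℝ) (x : ℝ × ℝ) : electricForm b1 b2 x = b2 * x.1 - b1 * x.2 :=
  rfl

/-- The form `(s sin θ − t cos θ) dz`, opposite to a potential of the magnetic field
`(cos θ, sin θ, 0)`. -/
def halfSpacePotential (θ : ℝ) : ℝ × ℝ × ℝ →L[ℝ] ℝ × ℝ × ℝ →L[ℝ] ℝ :=
  (Real.sin θ • ContinuousLinearMap.fst ℝ ℝ (ℝ × ℝ)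
    - Real.cos θ • (ContinuousLinearMap.fst ℝ ℝ ℝ).comp (.snd ℝ ℝ (ℝ × ℝ))).smulRight
      ((ContinuousLinearMap.snd ℝ ℝ ℝ).comp (.snd ℝ ℝ (ℝ × ℝ)))

theorem halfSpacePotential_apply (θ : ℝ) (x h : ℝ × ℝ × ℝ) :
    halfSpacePotential θ x h = (Real.sin θ * x.1 - Real.cos θ * x.2.1) * h.2.2 :=
  rfl

theorem specInf2D_eq_rayleighInf (Ω : Set (ℝ × ℝ)) (b1 b2 b3 τ : ℝ) :
    specInf2D Ω b1 b2 b3 τ = rayleighInf (volume.restrict Ω)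
      (fiberEnergy (volume.restrict Ω) planeFrame (planePotential b3)
        fun x => electricForm b1 b2 x - τ) := by
  have henergy : energy2D Ω b1 b2 b3 τ = fiberEnergy (volume.restrict Ω) planeFrame
      (planePotential b3) fun x => electricForm b1 b2 x - τ := by
    ext u
    simp [energy2D, fiberEnergy, magDeriv, planeFrame, planePotential, electricForm, mul_comm]
  simp only [specInf2D, rayleighInf, isTestFun_iff, and_assoc, norm2D, henergy]

theorem sigmaHS_eq_rayleighInf (θ : ℝ) :
    sigmaHS θ = rayleighInf (volume.restrict halfSpace3)
      (magEnergy (volume.restrict halfSpace3) spaceFrame (halfSpacePotential θ)) := by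
  have henergy (u : ℝ × ℝ × ℝ → ℂ) : ∫ x in halfSpace3,
      ‖fderiv ℝ u x (1, 0, 0)‖ ^ 2 + ‖fderiv ℝ u x (0, 1, 0)‖ ^ 2
        + ‖(-I) * fderiv ℝ u x (0, 0, 1) - ((x.2.1 * Real.cos θ : ℝ) : ℂ) * u x
            + ((x.1 * Real.sin θ : ℝ) : ℂ) * u x‖ ^ 2
      = magEnergy (volume.restrict halfSpace3) spaceFrame (halfSpacePotential θ) u := by
    refine integral_congr_ae (Eventually.of_forall fun x => ?_)
    simp only [neg_mul, Complex.ofReal_mul, Complex.ofReal_cos, Complex.ofReal_sin, magDeriv,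
      spaceFrame, halfSpacePotential_apply, Complex.ofReal_sub, Fin.sum_univ_three,
      Matrix.cons_val_zero, Complex.ofReal_zero, mul_zero, zero_mul, add_zero, norm_neg,
      Complex.norm_mul, Complex.norm_I, one_mul, Matrix.cons_val_one, Matrix.cons_val,
      Complex.ofReal_one, mul_one]
    ring_nf
  simp only [sigmaHS, rayleighInf, isTestFun_iff, and_assoc, henergy]

/-- The isometry mapping the second unit vector of `spaceFrame` to the inner normal of
`halfPlane β`, with the remaining freedom parametrized by the angle `ψ`. -/
def halfSpaceRotation (β ψ : ℝ) : (ℝ × ℝ × ℝ) ≃L[ℝ] (ℝ × ℝ) × ℝ :=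
  LinearEquiv.toContinuousLinearEquiv
    { toFun x :=
        (((x.1 * Real.cos ψ - x.2.2 * Real.sin ψ) * Real.cos β + x.2.1 * Real.sin β,
          -(x.1 * Real.cos ψ - x.2.2 * Real.sin ψ) * Real.sin β + x.2.1 * Real.cos β),
          x.1 * Real.sin ψ + x.2.2 * Real.cos ψ)
      invFun y :=
        ((y.1.1 * Real.cos β - y.1.2 * Real.sin β) * Real.cos ψ + y.2 * Real.sin ψ,
          y.1.1 * Real.sin β + y.1.2 * Real.cos β,
          -(y.1.1 * Real.cos β - y.1.2 * Real.sin β) * Real.sin ψ + y.2 * Real.cos ψ)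
      map_add' x y := by
        ext <;> simp only [Prod.fst_add, Prod.snd_add] <;> ring
      map_smul' c x := by
        ext <;> simp only [Prod.smul_fst, Prod.smul_snd, smul_eq_mul, RingHom.id_apply] <;> ring
      left_inv x := by
        ext <;> grind [Real.sin_sq_add_cos_sq β, Real.sin_sq_add_cos_sq ψ]
      right_inv y := by
        ext <;> grind [Real.sin_sq_add_cos_sq β, Real.sin_sq_add_cos_sq ψ] }

theorem halfSpaceRotation_apply (β ψ : ℝ) (x : ℝ × ℝ × ℝ) :
    halfSpaceRotation β ψ x =
      (((x.1 * Real.cos ψ - x.2.2 * Real.sin ψ) * Real.cos β + x.2.1 * Real.sin β,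
        -(x.1 * Real.cos ψ - x.2.2 * Real.sin ψ) * Real.sin β + x.2.1 * Real.cos β),
        x.1 * Real.sin ψ + x.2.2 * Real.cos ψ) :=
  rfl

/-- The matrix whose `i`-th row holds the coordinates of `halfSpaceRotation β ψ (spaceFrame i)`. -/
def halfSpaceRotationMatrix (β ψ : ℝ) : Matrix (Fin 3) (Fin 3) ℝ :=
  !![Real.cos ψ * Real.cos β, -Real.cos ψ * Real.sin β, Real.sin ψ;
    Real.sin β, Real.cos β, 0;
    -Real.sin ψ * Real.cos β, Real.sin ψ * Real.sin β, Real.cos ψ]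

theorem halfSpaceRotationMatrix_mem_orthogonalGroup (β ψ : ℝ) :
    halfSpaceRotationMatrix β ψ ∈ Matrix.orthogonalGroup (Fin 3) ℝ := by
  rw [Matrix.mem_orthogonalGroup_iff]
  ext i j
  rw [Matrix.mul_apply, Fin.sum_univ_three]
  fin_cases i <;> fin_cases j <;>
    simp only [halfSpaceRotationMatrix, Matrix.transpose_apply, Matrix.of_apply, Matrix.cons_val,
      Matrix.one_apply, Fin.mk_one, Fin.zero_eta, Fin.reduceFinMk, Fin.isValue, Fin.reduceEq,
      if_true, if_false, zero_ne_one, one_ne_zero] <;>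
    grind [Real.sin_sq_add_cos_sq β, Real.sin_sq_add_cos_sq ψ]

theorem halfSpaceRotation_spaceFrame (β ψ : ℝ) (i : Fin 3) :
    halfSpaceRotation β ψ (spaceFrame i)
      = ∑ j, halfSpaceRotationMatrix β ψ i j • liftFrame planeFrame j := by
  rw [Fin.sum_univ_three]
  fin_cases i <;>
    simp [halfSpaceRotation_apply, halfSpaceRotationMatrix, spaceFrame, planeFrame, liftFrame,
      Fin.snoc]

theorem halfSpaceRotation_preimage (β ψ : ℝ) :
    halfSpaceRotation β ψ ⁻¹' halfPlane β ×ˢ univ = halfSpace3 := by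
  ext x
  have hnormal : (halfSpaceRotation β ψ x).1.1 * Real.sin β
      + (halfSpaceRotation β ψ x).1.2 * Real.cos β = x.2.1 := by
    simp only [halfSpaceRotation_apply]
    grind [Real.sin_sq_add_cos_sq β]
  simp [halfPlane, halfSpace3, hnormal]

theorem halfSpacePotential_curl {b1 b2 b3 β θ ψ : ℝ}
    (h1 : b1 * Real.cos β - b2 * Real.sin β = Real.cos θ * Real.cos ψ)
    (h2 : b1 * Real.sin β + b2 * Real.cos β = Real.sin θ)
    (h3 : b3 = Real.cos θ * Real.sin ψ) (x h : ℝ × ℝ × ℝ) :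
    halfSpacePotential θ x h - halfSpacePotential θ h x
      = liftPotential (planePotential b3) (electricForm b1 b2) (halfSpaceRotation β ψ x)
          (halfSpaceRotation β ψ h)
        - liftPotential (planePotential b3) (electricForm b1 b2) (halfSpaceRotation β ψ h)
          (halfSpaceRotation β ψ x) := by
  simp only [halfSpacePotential_apply, liftPotential_apply, planePotential_apply,
    electricForm_apply, halfSpaceRotation_apply]
  grind [Real.sin_sq_add_cos_sq β, Real.sin_sq_add_cos_sq ψ]

theorem restrict_halfPlane_ne_zero (β : ℝ) : volume.restrict (halfPlane β) ≠ 0 := by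
  have hmem : (Real.sin β, Real.cos β) ∈ halfPlane β := by
    simp [halfPlane, ← sq]
  rw [Ne, Measure.restrict_eq_zero]
  exact (isOpen_halfPlane β).measure_ne_zero volume ⟨_, hmem⟩

theorem measurePreserving_add_restrict_halfPlane (β r : ℝ) :
    MeasurePreserving (· + r • (Real.cos β, -Real.sin β)) (volume.restrict (halfPlane β))
      (volume.restrict (halfPlane β)) := by
  have hpreimage : (· + r • (Real.cos β, -Real.sin β)) ⁻¹' halfPlane β = halfPlane β := by
    ext x
    simp only [Prod.smul_mk, smul_eq_mul, mul_neg, halfPlane, preimage_ofPred_eq, Prod.fst_add,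
      Prod.snd_add, mem_ofPred_eq]
    ring_nf
  simpa only [hpreimage] using (measurePreserving_add_right volume
    (r • (Real.cos β, -Real.sin β))).restrict_preimage (isOpen_halfPlane β).measurableSet

theorem rayleighInf_fiberEnergy_halfPlane_eq_iInf {b1 b2 β : ℝ}
    (h : b1 * Real.sin β + b2 * Real.cos β ≠ 0) (b3 τ : ℝ) :
    rayleighInf (volume.restrict (halfPlane β)) (fiberEnergy (volume.restrict (halfPlane β))
        planeFrame (planePotential b3) fun x => electricForm b1 b2 x - τ)
      = ⨅ τ' : ℝ, rayleighInf (volume.restrict (halfPlane β)) (fiberEnergy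
        (volume.restrict (halfPlane β)) planeFrame (planePotential b3)
          fun x => electricForm b1 b2 x - τ') := by
  have hfield : electricForm b1 b2 (Real.cos β, -Real.sin β) ≠ 0 := by
    simpa [electricForm, add_comm] using h
  simp_rw [fun τ' => rayleighInf_fiberEnergy_eq_of_measurePreserving _
    (measurePreserving_add_restrict_halfPlane β) planeFrame (planePotential b3) hfield τ' τ,
    ciInf_const]

theorem rayleighInf_magEnergy_halfPlane_prod {b1 b2 b3 β θ : ℝ}
    (hb : b1 ^ 2 + b2 ^ 2 + b3 ^ 2 = 1)
    (hθ : b1 * Real.sin β + b2 * Real.cos β = Real.sin θ) :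
    rayleighInf ((volume.restrict (halfPlane β)).prod volume)
        (magEnergy ((volume.restrict (halfPlane β)).prod volume) (liftFrame planeFrame)
          (liftPotential (planePotential b3) (electricForm b1 b2)))
      = sigmaHS θ := by
  have hnorm : (b1 * Real.cos β - b2 * Real.sin β) ^ 2 + b3 ^ 2 = Real.cos θ ^ 2 := by
    rw [Real.cos_sq', ← hθ, ← hb]
    linear_combination (b1 ^ 2 + b2 ^ 2) * Real.sin_sq_add_cos_sq β
  obtain ⟨ψ, hcos, hsin⟩ := exists_eq_mul_cos_and_eq_mul_sin hnorm
  have : (volume : Measure (ℝ × ℝ × ℝ)).IsAddHaarMeasure :=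
    Measure.prod.instIsAddHaarMeasure volume volume
  have : (volume : Measure ((ℝ × ℝ) × ℝ)).IsAddHaarMeasure :=
    Measure.prod.instIsAddHaarMeasure volume volume
  obtain ⟨k, hk, hmap⟩ := exists_map_restrict_preimage_eq_smul_restrict (halfSpaceRotation β ψ)
    volume volume
  have hmeasure := hmap _ ((isOpen_halfPlane β).measurableSet.prod MeasurableSet.univ)
  rw [halfSpaceRotation_preimage, Measure.volume_eq_prod (ℝ × ℝ) ℝ, ← Measure.prod_restrict,
    Measure.restrict_univ] at hmeasure
  rw [sigmaHS_eq_rayleighInf, liftPotential_coe]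
  exact (rayleighInf_magEnergy_eq_of_orthogonal (halfSpaceRotation β ψ) hk hmeasure
    (halfSpaceRotationMatrix_mem_orthogonalGroup β ψ) (halfSpaceRotation_spaceFrame β ψ)
    (halfSpacePotential_curl hcos hθ hsin)).symm

theorem specInf2D_halfPlane {b1 b2 b3 β θ : ℝ} (hb : b1 ^ 2 + b2 ^ 2 + b3 ^ 2 = 1)
    (hθ : b1 * Real.sin β + b2 * Real.cos β = Real.sin θ) (h : Real.sin θ ≠ 0) (τ : ℝ) :
    specInf2D (halfPlane β) b1 b2 b3 τ = sigmaHS θ := by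
  rw [specInf2D_eq_rayleighInf, rayleighInf_fiberEnergy_halfPlane_eq_iInf (hθ.trans_ne h),
    ← rayleighInf_magEnergy_liftPotential_eq_iInf (restrict_halfPlane_ne_zero β) planeFrame
      (planePotential b3).contDiff (electricForm b1 b2).contDiff,
    rayleighInf_magEnergy_halfPlane_prod hb hθ]

end MagWedge

open MagWedge in
theorem specInf_hpLow_eq_general {α γ : ℝ} (hα : α ∈ Ioo (-π) π)
    (h : Real.sin α * Real.sin γ ≠ 0) (τ : ℝ) :
    specInf2D (hpLow α)
        (Real.sin γ * Real.cos (α / 2)) (Real.sin γ * Real.sin (α / 2)) (Real.cos γ) τ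
      = sigmaHS (Real.arcsin (Real.sin α * Real.sin γ)) := by
  have hsin : Real.sin (Real.arcsin (Real.sin α * Real.sin γ)) = Real.sin α * Real.sin γ := by
    refine Real.sin_arcsin' (abs_le.1 ?_)
    rw [abs_mul]
    exact mul_le_one₀ (Real.abs_sin_le_one α) (abs_nonneg _) (Real.abs_sin_le_one γ)
  have hnormal : Real.sin γ * Real.cos (α / 2) * Real.sin (α / 2)
      + Real.sin γ * Real.sin (α / 2) * Real.cos (α / 2) = Real.sin α * Real.sin γ := by
    have hdouble := Real.sin_two_mul (α / 2)
    rw [mul_div_cancel₀ α two_ne_zero] at hdouble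
    linear_combination -Real.sin γ * hdouble
  rw [hpLow_eq_halfPlane (Real.cos_pos_of_mem_Ioo ⟨by linarith [hα.1], by linarith [hα.2]⟩)]
  refine specInf2D_halfPlane ?_ (hnormal.trans hsin.symm) (hsin.trans_ne h) τ
  linear_combination Real.sin γ ^ 2 * Real.sin_sq_add_cos_sq (α / 2) + Real.sin_sq_add_cos_sq γ

open MagWedge in
/-- the bottom of the spectrum on the lower half-plane `Hp^low` is
`σ(arcsin(sin α · sin γ))`, independently of `τ`. -/
theorem specInf_hpLow_eq (α γ : ℝ) (hα : α ∈ Set.Ioo 0 π) (hγ : γ ∈ Set.Ioc 0 (π / 2)) :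
    ∀ τ : ℝ,
      specInf2D (hpLow α)
          (Real.sin γ * Real.cos (α / 2)) (Real.sin γ * Real.sin (α / 2)) (Real.cos γ) τ
        = sigmaHS (Real.arcsin (Real.sin α * Real.sin γ)) := by
  refine fun τ => specInf_hpLow_eq_general ⟨by linarith [hα.1, Real.pi_pos], hα.2⟩ ?_ τ
  have hγ' : 0 < Real.sin γ :=
    Real.sin_pos_of_pos_of_lt_pi hγ.1 (by linarith [hγ.2, Real.pi_pos])
  exact (mul_pos (Real.sin_pos_of_mem_Ioo hα) hγ').ne'
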